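/- arXiv:math/9304204 — 2 statements merged into one kernel-verified Lean document; each statement's English description precedes it below -/
import Mathlib

section
/- For each λ ∈ {1, 2, ℵ₀} and each cardinal κ with 𝔲 ≤ κ ≤ 𝔠, there is a downward-closed family F ⊆ ω^↑ω which has a countable upper bound and satisfies b(F) = λ and d(F) = κ. -/
open Filter Set

/-- The set of monotone (nondecreasing) functions ℕ → ℕ, i.e. ω^↑ω. -/
def MonoFam : Set (ℕ → ℕ) := {f | Monotone f}

/-- `f ≤* g` : `f n ≤ g n` for all but finitely many `n`. -/
def LeStar (f g : ℕ → ℕ) : Prop := ∀ᶠ n in atTop, f n ≤ g n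

/-- `f <* g` : `f n < g n` for all but finitely many `n`. -/
def LtStar (f g : ℕ → ℕ) : Prop := ∀ᶠ n in atTop, f n < g n

/-- `f ≺ g` : `lim (g n - f n) = +∞`. -/
def Prec (f g : ℕ → ℕ) : Prop := ∀ N : ℕ, ∀ᶠ n in atTop, f n + N ≤ g n

/-- `F` is closed downward under `≤*` within the monotone functions. -/
def DownwardClosed (F : Set (ℕ → ℕ)) : Prop :=
  ∀ f, Monotone f → ∀ g ∈ F, LeStar f g → f ∈ F

/-- `H` is unbounded in `F`. -/
def UnboundedIn (H F : Set (ℕ → ℕ)) : Prop :=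
  ∀ f ∈ F, ∃ h ∈ H, ¬ LtStar h f

/-- `H` dominates `F`. -/
def DominatesIn (H F : Set (ℕ → ℕ)) : Prop :=
  ∀ f ∈ F, ∃ h ∈ H, LeStar f h

/-- The bounding number `b(F)`. -/
noncomputable def bNum (F : Set (ℕ → ℕ)) : Cardinal :=
  sInf {c : Cardinal | ∃ H : Set (ℕ → ℕ), H ⊆ F ∧ UnboundedIn H F ∧ Cardinal.mk H = c}

/-- The dominating number `d(F)`. -/
noncomputable def dNum (F : Set (ℕ → ℕ)) : Cardinal :=
  sInf {c : Cardinal | ∃ H : Set (ℕ → ℕ), H ⊆ F ∧ DominatesIn H F ∧ Cardinal.mk H = c}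

/-- Membership in the S-class. -/
def SClass (F : Set (ℕ → ℕ)) : Prop :=
  ∃ h g : ℕ → ℕ, Monotone h ∧ Monotone g ∧
    (∀ f ∈ F, ∃ᶠ n in atTop, f n ≤ h n) ∧
    (∀ f, Monotone f → (∃ᶠ n in atTop, f n ≤ g n) → f ∈ F)

/-- A nonprincipal ultrafilter. -/
def NonPrincipal (U : Ultrafilter ℕ) : Prop := ∀ a : ℕ, U ≠ pure a

/-- Membership in the U-class for an ultrafilter `U`. -/
def UClass (U : Ultrafilter ℕ) (F : Set (ℕ → ℕ)) : Prop :=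
  ∃ h g : ℕ → ℕ, Monotone h ∧ Monotone g ∧
    (∀ f ∈ F, {n | f n ≤ h n} ∈ U) ∧
    (∀ f, Monotone f → {n | f n ≤ g n} ∈ U → f ∈ F)

/-- `χ(U)`, the least cardinality of a base generating the ultrafilter `U`. -/
noncomputable def ultraChi (U : Ultrafilter ℕ) : Cardinal :=
  sInf {c : Cardinal | ∃ B : Set (Set ℕ),
    (∀ b ∈ B, b ∈ U) ∧ (∀ A ∈ U, ∃ b ∈ B, b ⊆ A) ∧ Cardinal.mk B = c}

/-- The ultrafilter number `𝔲`. -/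
noncomputable def uNum : Cardinal :=
  sInf {c : Cardinal | ∃ U : Ultrafilter ℕ, NonPrincipal U ∧ ultraChi U = c}

/-- `A ⊆* B` : `A \ B` is finite. -/
def SubsetStar (A B : Set ℕ) : Prop := (A \ B).Finite

/-- A P-point. -/
def PPoint (V : Ultrafilter ℕ) : Prop :=
  NonPrincipal V ∧ ∀ C : Set (Set ℕ), C.Countable → (∀ A ∈ C, A ∈ V) →
    ∃ B ∈ V, ∀ A ∈ C, SubsetStar B A

/-- A `P_κ`-point. -/
def PKappaPoint (κ : Cardinal) (V : Ultrafilter ℕ) : Prop :=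
  NonPrincipal V ∧ ∀ C : Set (Set ℕ), Cardinal.mk C < κ → (∀ A ∈ C, A ∈ V) →
    ∃ B ∈ V, ∀ A ∈ C, SubsetStar B A

/-- `next(n, X)` : the least element of `X` which is `≥ n`. -/
noncomputable def nextIn (n : ℕ) (X : Set ℕ) : ℕ := sInf {x | x ∈ X ∧ n ≤ x}

/-- `F↓` : the monotone functions `g` with `f ≺ g` for all `f ∈ F`. -/
def FDown (F : Set (ℕ → ℕ)) : Set (ℕ → ℕ) := {g | Monotone g ∧ ∀ f ∈ F, Prec f g}

/-- `F` has a countable upper bound. -/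
def CountableUpperBound (F : Set (ℕ → ℕ)) : Prop :=
  ∃ G : Set (ℕ → ℕ), G.Countable ∧ G ⊆ FDown F ∧
    ¬ ∃ p, Monotone p ∧ (∀ f ∈ F, Prec f p) ∧ (∀ g ∈ G, Prec p g)

lemma uNum_exists : ∃ U : Ultrafilter ℕ, NonPrincipal U ∧ ∃ B : Set (Set ℕ),
    (∀ b ∈ B, b ∈ U) ∧ (∀ A ∈ U, ∃ b ∈ B, b ⊆ A) ∧ Cardinal.mk B = uNum := by
  have hne : {c : Cardinal | ∃ U : Ultrafilter ℕ, NonPrincipal U ∧ ultraChi U = c}.Nonempty := by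
    refine ⟨_, hyperfilter ℕ, ?_, rfl⟩
    intro a h
    have h1 : ({a} : Set ℕ) ∈ hyperfilter ℕ := by rw [h]; exact Ultrafilter.mem_pure.2 rfl
    exact notMem_hyperfilter_of_finite (Set.finite_singleton a) h1
  obtain ⟨U, hU, hc⟩ := csInf_mem hne
  refine ⟨U, hU, ?_⟩
  have hne2 : {c : Cardinal | ∃ B : Set (Set ℕ),
    (∀ b ∈ B, b ∈ U) ∧ (∀ A ∈ U, ∃ b ∈ B, b ⊆ A) ∧ Cardinal.mk B = c}.Nonempty :=
    ⟨_, {s | s ∈ U}, fun b h => h, fun A h => ⟨A, h, subset_rfl⟩, rfl⟩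
  obtain ⟨B, h1, h2, h3⟩ := csInf_mem hne2
  exact ⟨B, h1, h2, h3.trans hc⟩

lemma infinite_of_mem {U : Ultrafilter ℕ} (hU : NonPrincipal U) {b : Set ℕ} (hb : b ∈ U) :
    b.Infinite := by
  intro hf
  obtain ⟨x, _, hx⟩ := Ultrafilter.eq_pure_of_finite_mem hf hb
  exact hU x hx

lemma base_infinite {U : Ultrafilter ℕ} (hU : NonPrincipal U) {B : Set (Set ℕ)}
    (h1 : ∀ b ∈ B, b ∈ U) (h2 : ∀ A ∈ U, ∃ b ∈ B, b ⊆ A) : B.Infinite := by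
  intro hf
  have hI : ⋂₀ B ∈ (U : Filter ℕ) := (Filter.sInter_mem hf).2 h1
  obtain ⟨x, hx⟩ := (infinite_of_mem hU hI).nonempty
  have : ({x} : Set ℕ)ᶜ ∈ U := by
    rw [Ultrafilter.compl_mem_iff_notMem]
    exact fun h => infinite_of_mem hU h (Set.finite_singleton x)
  obtain ⟨b, hb, hs⟩ := h2 _ this
  exact hs (hx b hb) rfl

open Classical in
/-- number of elements of `b` below `m` -/
noncomputable def cnt (b : Set ℕ) (m : ℕ) : ℕ := ((Finset.range m).filter (· ∈ b)).card

lemma cnt_le (b : Set ℕ) (m : ℕ) : cnt b m ≤ m := by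
  classical
  unfold cnt
  exact (Finset.card_filter_le _ _).trans (by simp)

lemma cnt_tendsto {b : Set ℕ} (hb : b.Infinite) (N : ℕ) : ∀ᶠ m in atTop, N ≤ cnt b m := by
  classical
  obtain ⟨t, ht, hc⟩ := hb.exists_subset_card_eq N
  filter_upwards [eventually_gt_atTop (t.sup id)] with m hm
  rw [← hc]
  apply Finset.card_le_card
  intro x hx
  have : x ≤ t.sup id := Finset.le_sup (f := id) hx
  simp only [Finset.mem_filter, Finset.mem_range]
  exact ⟨by omega, ht hx⟩

lemma cnt_meets {b : Set ℕ} {x y : ℕ} (h : x < cnt b y) : ∃ z ∈ b, x ≤ z ∧ z < y := by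
  classical
  by_contra hcon
  push Not at hcon
  have : cnt b y ≤ x := by
    unfold cnt
    calc _ ≤ (Finset.range x).card := Finset.card_le_card (by
            intro z hz
            simp only [Finset.mem_filter, Finset.mem_range] at hz ⊢
            by_contra h'
            exact absurd (hcon z hz.2 (by omega)) (by omega))
      _ = x := by simp
  omega

lemma no_slow {U : Ultrafilter ℕ} {B : Set (Set ℕ)}
    (h2 : ∀ A ∈ U, ∃ b ∈ B, b ⊆ A) (s : ℕ → ℕ) (hs : ∀ N, ∀ᶠ m in atTop, N ≤ s m)
    (h : ∀ b ∈ B, ∀ᶠ m in atTop, s m ≤ cnt b m) : False := by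
  have hstep : ∀ x, ∃ y, x < y ∧ x < s y := by
    intro x
    obtain ⟨y, hy⟩ := ((eventually_gt_atTop x).and (hs (x+1))).exists
    exact ⟨y, hy.1, hy.2⟩
  choose nx hnx1 hnx2 using hstep
  let x : ℕ → ℕ := fun i => nx^[i] 0
  have hx : ∀ i, x (i+1) = nx (x i) := fun i => Function.iterate_succ_apply' nx i 0
  have hmono : StrictMono x := strictMono_nat_of_lt_succ (fun i => by rw [hx]; exact hnx1 _)
  have hmeet : ∀ b ∈ B, ∀ᶠ i in atTop, ∃ z ∈ b, x i ≤ z ∧ z < x (i+1) := by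
    intro b hb
    have h3 : Tendsto (fun i => x (i+1)) atTop atTop :=
      hmono.tendsto_atTop.comp (tendsto_add_atTop_nat 1)
    filter_upwards [h3.eventually (h b hb)] with i hi
    apply cnt_meets
    refine lt_of_lt_of_le ?_ hi
    rw [hx]; exact hnx2 _
  have hdisj : ∀ i j z, x i ≤ z → z < x (i+1) → x j ≤ z → z < x (j+1) → i = j := by
    intro i j z a1 a2 a3 a4
    have := hmono.lt_iff_lt.1 (lt_of_le_of_lt a1 a4)
    have := hmono.lt_iff_lt.1 (lt_of_le_of_lt a3 a2)
    omega
  let A : Set ℕ := {z | ∃ i, x (2*i) ≤ z ∧ z < x (2*i+1)}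
  rcases U.mem_or_compl_mem A with hA | hA
  · obtain ⟨b, hb, hbA⟩ := h2 _ hA
    obtain ⟨N, hN⟩ := eventually_atTop.1 (hmeet b hb)
    obtain ⟨z, hz, a1, a2⟩ := hN (2*N+1) (by omega)
    obtain ⟨i, a3, a4⟩ := hbA hz
    have := hdisj _ _ _ a1 a2 a3 a4
    omega
  · obtain ⟨b, hb, hbA⟩ := h2 _ hA
    obtain ⟨N, hN⟩ := eventually_atTop.1 (hmeet b hb)
    obtain ⟨z, hz, a1, a2⟩ := hN (2*N) (by omega)
    exact hbA hz ⟨N, a1, a2⟩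

/-- almost disjoint family indexed by `ℕ → Bool` -/
def adSet (x : ℕ → Bool) : Set ℕ := range fun n => Encodable.encode ((List.range n).map x)

lemma adSet_inj (x y : ℕ → Bool) {n m : ℕ}
    (h : Encodable.encode ((List.range n).map x) = Encodable.encode ((List.range m).map y)) :
    n = m ∧ ∀ k < n, x k = y k := by
  have h := Encodable.encode_injective h
  have hl := congrArg List.length h
  simp only [List.length_map, List.length_range] at hl
  subst hl
  refine ⟨rfl, fun k hk => ?_⟩
  exact List.map_inj_left.1 h k (List.mem_range.2 hk)

lemma adSet_infinite (x : ℕ → Bool) : (adSet x).Infinite :=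
  Set.infinite_range_of_injective (fun _ _ h => (adSet_inj x x h).1)

lemma adSet_inter {x y : ℕ → Bool} (h : x ≠ y) : (adSet x ∩ adSet y).Finite := by
  obtain ⟨k, hk⟩ := Function.ne_iff.1 h
  refine ((Set.finite_Iic k).image
    (fun n => Encodable.encode ((List.range n).map x))).subset ?_
  rintro z ⟨⟨n, hn⟩, ⟨m, hm⟩⟩
  refine ⟨n, ?_, hn⟩
  have := (adSet_inj x y (hn.trans hm.symm)).2
  simp only [mem_Iic]
  by_contra hc
  exact hk (this k (by omega))

open Classical in
/-- basic functions -/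
noncomputable def basicF (b A : Set ℕ) (n : ℕ) : ℕ :=
  n * n + (if n % 2 = 0 then n - cnt b (n / 2) else if n / 2 ∈ A then n / 2 else 0)

def topG (n : ℕ) : ℕ := n * n + n

lemma basicF_mono (b A : Set ℕ) : Monotone (basicF b A) := by
  apply monotone_nat_of_le_succ
  intro n
  have h1 : basicF b A n ≤ n * n + n := by
    unfold basicF; split_ifs <;> omega
  have h2 : (n+1)*(n+1) ≤ basicF b A (n+1) := by
    unfold basicF; omega
  nlinarith

lemma topG_mono : Monotone topG := by
  intro a b h
  unfold topG
  nlinarith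

lemma basicF_prec {b : Set ℕ} (hb : b.Infinite) (A : Set ℕ) : Prec (basicF b A) topG := by
  intro N
  have hdiv : Tendsto (fun n : ℕ => n / 2) atTop atTop := Nat.tendsto_div_const_atTop (by norm_num)
  filter_upwards [hdiv.eventually (cnt_tendsto hb N), eventually_ge_atTop (2*N)] with n h1 h2
  have := cnt_le b (n/2)
  unfold basicF topG
  split_ifs <;> omega

section family

variable {ι : Type} (f : ι → ℕ → ℕ)

def KeyProp : Prop := ∀ α, ∀ D : Finset ι, ∀ N : ℕ,
  LeStar (f α) (fun n => D.sup (fun β => f β n) + N) → α ∈ D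

def Fam3 : Set (ℕ → ℕ) :=
  {h | Monotone h ∧ ∃ D : Finset ι, ∃ N : ℕ, LeStar h (fun n => D.sup (fun β => f β n) + N)}

def Fam2 : Set (ℕ → ℕ) :=
  {h | Monotone h ∧ ∃ α : ι, ∃ N : ℕ, LeStar h (fun n => f α n + N)}

def Fam1 : Set (ℕ → ℕ) :=
  {h | Monotone h ∧ ∃ α : ι, LeStar h (f α)}

variable {f}

lemma LeStar.tr {a b c : ℕ → ℕ} (h1 : LeStar a b) (h2 : LeStar b c) : LeStar a c := by
  filter_upwards [h1, h2] with n a b using a.trans b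

lemma LtStar.le {a b : ℕ → ℕ} (h1 : LtStar a b) : LeStar a b := by
  filter_upwards [h1] with n a using a.le

lemma LeStar.rf (a : ℕ → ℕ) : LeStar a a := Eventually.of_forall fun _ => le_rfl

lemma fam12 : Fam1 f ⊆ Fam2 f := fun _ ⟨hm, α, h⟩ => ⟨hm, α, 0, h⟩

lemma fam23 : Fam2 f ⊆ Fam3 f := fun _ ⟨hm, α, N, h⟩ => ⟨hm, {α}, N, by simpa using h⟩

lemma cub {U : Ultrafilter ℕ} (hU : NonPrincipal U) {B : Set (Set ℕ)}
    (h1 : ∀ b ∈ B, b ∈ U) (h2 : ∀ A ∈ U, ∃ b ∈ B, b ⊆ A)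
    (bb : ι → Set ℕ) (AA : ι → Set ℕ) (hb : range bb = B)
    (hf : ∀ α, f α = basicF (bb α) (AA α)) {F : Set (ℕ → ℕ)} (hF : F ⊆ Fam3 f)
    (hfF : ∀ α, f α ∈ F) : CountableUpperBound F := by
  have hpre : ∀ α, Prec (f α) topG := fun α => by
    rw [hf]
    exact basicF_prec (infinite_of_mem hU (h1 _ (hb ▸ mem_range_self α))) _
  refine ⟨{topG}, Set.countable_singleton _, ?_, ?_⟩
  · rintro g rfl
    refine ⟨topG_mono, fun h hh N => ?_⟩
    obtain ⟨_, D, M, hD⟩ := hF hh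
    have hall : ∀ᶠ n in atTop, ∀ α ∈ D, f α n + (M + N) ≤ topG n :=
      (Filter.eventually_all_finset D).2 fun α _ => hpre α (M+N)
    filter_upwards [hall, hD, eventually_ge_atTop (M+N)] with n a1 a2 a3
    have : D.sup (fun β => f β n) ≤ topG n - (M+N) :=
      Finset.sup_le fun α hα => by have := a1 α hα; omega
    have : n ≤ topG n := by unfold topG; omega
    omega
  · rintro ⟨p, _, hp1, hp2⟩
    have hp2 := hp2 topG rfl
    have hmul : Tendsto (fun m : ℕ => 2 * m) atTop atTop :=
      tendsto_id.const_mul_atTop' (by norm_num)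
    apply no_slow h2 (fun m => topG (2*m) - p (2*m))
    · intro N
      filter_upwards [hmul.eventually (hp2 N)] with m hm
      omega
    · intro b hbB
      rw [← hb] at hbB
      obtain ⟨α, rfl⟩ := hbB
      filter_upwards [hmul.eventually (hp1 _ (hfF α) 0)] with m hm
      rw [hf] at hm
      have := cnt_le (bb α) m
      simp only [basicF, Nat.mul_mod_right, if_true] at hm
      rw [Nat.mul_div_cancel_left _ (by norm_num : 0 < 2)] at hm
      simp only [topG]
      omega

lemma keyProp_basic (bb : ι → Set ℕ) (AA : ι → Set ℕ)
    (hf : ∀ α, f α = basicF (bb α) (AA α)) (hinf : ∀ α, (AA α).Infinite)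
    (had : ∀ α β, α ≠ β → (AA α ∩ AA β).Finite) : KeyProp f := by
  intro α D N h
  by_contra hα
  have h1 : ∀ᶠ m in atTop, ∀ β ∈ D, ¬ (m ∈ AA α ∩ AA β) := by
    refine (Filter.eventually_all_finset D).2 fun β hβ => ?_
    have := had α β (fun e => hα (e ▸ hβ))
    rw [← Nat.cofinite_eq_atTop]
    exact this.eventually_cofinite_notMem
  have hmul : Tendsto (fun m : ℕ => 2 * m + 1) atTop atTop :=
    tendsto_atTop_mono (fun m => by show m ≤ 2 * m + 1; omega) tendsto_id
  have h2 : ∃ᶠ m in atTop, m ∈ AA α := Nat.frequently_atTop_iff_infinite.2 (hinf α)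
  obtain ⟨m, hm, h1, h3, h4⟩ :=
    (h2.and_eventually (h1.and ((hmul.eventually h).and (eventually_gt_atTop N)))).exists
  have e1 : (2 * m + 1) % 2 ≠ 0 := by omega
  have e2 : (2 * m + 1) / 2 = m := by omega
  have hs : D.sup (fun β => f β (2*m+1)) ≤ (2*m+1)*(2*m+1) := by
    refine Finset.sup_le fun β hβ => ?_
    have : m ∉ AA β := fun h => h1 β hβ ⟨hm, h⟩
    rw [hf]
    simp [basicF, e1, e2, this]
  have hb : f α (2*m+1) = (2*m+1)*(2*m+1) + m := by
    rw [hf]; simp [basicF, e1, e2, hm]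
  beta_reduce at h3
  omega

lemma KeyProp.eq (hk : KeyProp f) {α β : ι} {N : ℕ} (h : LeStar (f α) (fun n => f β n + N)) :
    α = β := by
  have := hk α {β} N (by simpa using h)
  simpa using this

lemma KeyProp.inj (hk : KeyProp f) : Function.Injective f := fun α β h =>
  hk.eq (N := 0) (by rw [h]; exact LeStar.rf _)

lemma finite_below (hk : KeyProp f) {h : ℕ → ℕ} (hh : h ∈ Fam3 f) :
    {α | LeStar (f α) h}.Finite := by
  obtain ⟨_, D, N, hD⟩ := hh
  exact D.finite_toSet.subset fun α hα => hk α D N (hα.tr hD)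

lemma d_ge (hk : KeyProp f) [Infinite ι] {F : Set (ℕ → ℕ)} (hF : F ⊆ Fam3 f)
    (hfF : ∀ α, f α ∈ F) {H : Set (ℕ → ℕ)} (hH : H ⊆ F) (hd : DominatesIn H F) :
    Cardinal.mk ι ≤ Cardinal.mk H := by
  have hcov : (Set.univ : Set ι) ⊆ ⋃ h : H, {α | LeStar (f α) h.1} := by
    intro α _
    obtain ⟨h, hh, hl⟩ := hd _ (hfF α)
    exact mem_iUnion.2 ⟨⟨h, hh⟩, hl⟩
  rcases H.finite_or_infinite with hfin | hinf
  · exfalso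
    have : Finite H := hfin
    have := (Set.finite_iUnion fun h : H => finite_below hk (hF (hH h.2))).subset hcov
    exact Set.infinite_univ this
  · have : Infinite H := hinf.to_subtype
    have hH0 : Cardinal.aleph0 ≤ Cardinal.mk H := Cardinal.infinite_iff.1 this
    calc Cardinal.mk ι = Cardinal.mk (Set.univ : Set ι) := Cardinal.mk_univ.symm
      _ ≤ Cardinal.mk (⋃ h : H, {α | LeStar (f α) h.1}) := Cardinal.mk_le_mk_of_subset hcov
      _ ≤ Cardinal.sum fun h : H => Cardinal.mk {α | LeStar (f α) h.1} :=
          Cardinal.mk_iUnion_le_sum_mk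
      _ ≤ Cardinal.sum fun _ : H => Cardinal.aleph0 := Cardinal.sum_le_sum _ _ fun h =>
          (finite_below hk (hF (hH h.2))).lt_aleph0.le
      _ = Cardinal.mk H * Cardinal.aleph0 := by simp
      _ = Cardinal.mk H := Cardinal.mul_aleph0_eq hH0

lemma d_eq (hk : KeyProp f) [Infinite ι] {F : Set (ℕ → ℕ)} (hF : F ⊆ Fam3 f)
    (hfF : ∀ α, f α ∈ F) {κ : Type} (g : κ → ℕ → ℕ) (hκ : Cardinal.mk κ = Cardinal.mk ι)
    (hg : ∀ k, g k ∈ F) (hd : DominatesIn (range g) F) : dNum F = Cardinal.mk ι := by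
  have hmem : Cardinal.mk (range g) ∈
      {c : Cardinal | ∃ H : Set (ℕ → ℕ), H ⊆ F ∧ DominatesIn H F ∧ Cardinal.mk H = c} :=
    ⟨_, range_subset_iff.2 hg, hd, rfl⟩
  apply le_antisymm
  · exact (csInf_le' hmem).trans (Cardinal.mk_range_le.trans hκ.le)
  · apply le_csInf ⟨_, hmem⟩
    rintro c ⟨H, h1, h2, rfl⟩
    exact d_ge hk hF hfF h1 h2

lemma b_eq {F : Set (ℕ → ℕ)} {c : Cardinal} {H : Set (ℕ → ℕ)} (hH : H ⊆ F)
    (hu : UnboundedIn H F) (hc : Cardinal.mk H = c)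
    (hmin : ∀ H' ⊆ F, Cardinal.mk H' < c → ¬ UnboundedIn H' F) : bNum F = c := by
  have hmem : c ∈
      {c : Cardinal | ∃ H : Set (ℕ → ℕ), H ⊆ F ∧ UnboundedIn H F ∧ Cardinal.mk H = c} :=
    ⟨_, hH, hu, hc⟩
  apply le_antisymm (csInf_le' hmem)
  apply le_csInf ⟨_, hmem⟩
  rintro c ⟨H, h1, h2, rfl⟩
  by_contra hcon
  exact hmin H h1 (not_le.1 hcon) h2

lemma sup_add_mono (hm : ∀ α, Monotone (f α)) (D : Finset ι) (N : ℕ) :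
    Monotone (fun n => D.sup (fun β => f β n) + N) := by
  intro a b h
  exact Nat.add_le_add_right (Finset.sup_mono_fun fun β _ => hm β h) N

lemma mem1 (hm : ∀ α, Monotone (f α)) (α : ι) : f α ∈ Fam1 f := ⟨hm α, α, LeStar.rf _⟩

lemma mem2 (hm : ∀ α, Monotone (f α)) (α : ι) (N : ℕ) : (fun n => f α n + N) ∈ Fam2 f :=
  ⟨fun _ _ h => Nat.add_le_add_right (hm α h) N, α, N, LeStar.rf _⟩

lemma mem3 (hm : ∀ α, Monotone (f α)) (D : Finset ι) (N : ℕ) :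
    (fun n => D.sup (fun β => f β n) + N) ∈ Fam3 f :=
  ⟨sup_add_mono hm D N, D, N, LeStar.rf _⟩

lemma LtStar.irrefl {a : ℕ → ℕ} (h : LtStar a a) : False := by
  obtain ⟨n, hn⟩ := h.exists
  exact lt_irrefl _ hn

lemma b1 (hk : KeyProp f) (hm : ∀ α, Monotone (f α)) [Infinite ι] : bNum (Fam1 f) = 1 := by
  obtain ⟨a⟩ : Nonempty ι := inferInstance
  refine b_eq (H := {f a}) (by simpa using mem1 hm a) ?_ (by simp) ?_
  · rintro h ⟨_, α, hα⟩
    refine ⟨f a, rfl, fun hlt => ?_⟩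
    have e : a = α := hk.eq (N := 0) (hlt.le.tr hα)
    subst e
    refine LtStar.irrefl (a := f a) ?_
    filter_upwards [hlt, hα] with n x y using lt_of_lt_of_le x y
  · intro H _ hc hu
    rw [Cardinal.lt_one_iff, Cardinal.mk_eq_zero_iff] at hc
    obtain ⟨h, hh, _⟩ := hu _ (mem1 hm a)
    exact hc.false ⟨h, hh⟩

lemma b2 (hk : KeyProp f) (hm : ∀ α, Monotone (f α)) [Infinite ι] : bNum (Fam2 f) = 2 := by
  obtain ⟨a, b, hab⟩ := exists_pair_ne ι
  refine b_eq (H := {f a, f b}) ?_ ?_ ?_ ?_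
  · rintro _ (rfl | rfl)
    · exact fam12 (mem1 hm a)
    · exact fam12 (mem1 hm b)
  · rintro h ⟨_, α, N, hα⟩
    by_contra hcon
    push Not at hcon
    have e1 := hk.eq ((hcon (f a) (by simp)).le.tr hα)
    have e2 := hk.eq ((hcon (f b) (by simp)).le.tr hα)
    exact hab (e1.trans e2.symm)
  · exact Cardinal.mk_insert (by simpa using fun e => hab (hk.inj e)) |>.trans (by
      rw [Cardinal.mk_singleton]; norm_num)
  · intro H hHF hc hu
    have hle : Cardinal.mk H ≤ 1 := by
      have : (2 : Cardinal) = Order.succ 1 := by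
        have h := Cardinal.nat_succ 1
        push_cast at h
        rw [← h]
      rw [this] at hc
      exact Order.lt_succ_iff.1 hc
    have hsub : H.Subsingleton := Cardinal.mk_le_one_iff_set_subsingleton.1 hle
    rcases hsub.eq_empty_or_singleton with rfl | ⟨h, rfl⟩
    · obtain ⟨h, hh, _⟩ := hu _ (mem2 hm a 0)
      exact hh
    · obtain ⟨_, α, N, hα⟩ := hHF (mem_singleton h)
      obtain ⟨h', rfl, hn⟩ := hu _ (mem2 hm α (N+1))
      apply hn
      filter_upwards [hα] with n hn
      omega

lemma b3 (hk : KeyProp f) (hm : ∀ α, Monotone (f α)) [Infinite ι] :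
    bNum (Fam3 f) = Cardinal.aleph0 := by
  classical
  let e := Infinite.natEmbedding ι
  refine b_eq (H := range (fun i => f (e i))) ?_ ?_ ?_ ?_
  · rintro _ ⟨i, rfl⟩
    exact fam23 (fam12 (mem1 hm _))
  · intro h hh
    by_contra hcon
    push Not at hcon
    have : range e ⊆ {α | LeStar (f α) h} := by
      rintro _ ⟨i, rfl⟩
      exact (hcon _ ⟨i, rfl⟩).le
    exact Set.infinite_range_of_injective e.injective ((finite_below hk hh).subset this)
  · exact (Cardinal.mk_range_eq _ (hk.inj.comp e.injective)).trans Cardinal.mk_nat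
  · intro H hHF hc hu
    have hfin : H.Finite := Cardinal.lt_aleph0_iff_set_finite.1 hc
    choose! D N hDN using fun h (hh : h ∈ H) => (hHF hh).2
    let S := hfin.toFinset
    obtain ⟨h, hh, hn⟩ := hu _ (mem3 hm (S.biUnion D) (S.sup N + 1))
    apply hn
    have hS : h ∈ S := hfin.mem_toFinset.2 hh
    filter_upwards [hDN h hh] with n hn
    have a1 : (D h).sup (fun β => f β n) ≤ (S.biUnion D).sup (fun β => f β n) :=
      Finset.sup_mono (Finset.subset_biUnion_of_mem D hS)
    have a2 : N h ≤ S.sup N := Finset.le_sup hS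
    omega

lemma d1 (hk : KeyProp f) (hm : ∀ α, Monotone (f α)) [Infinite ι] :
    dNum (Fam1 f) = Cardinal.mk ι :=
  d_eq hk (fam12.trans fam23) (mem1 hm) f rfl (mem1 hm)
    fun _ ⟨_, α, h⟩ => ⟨_, ⟨α, rfl⟩, h⟩

lemma d2 (hk : KeyProp f) (hm : ∀ α, Monotone (f α)) [Infinite ι] :
    dNum (Fam2 f) = Cardinal.mk ι :=
  d_eq hk fam23 (fun α => fam12 (mem1 hm α)) (κ := ι × ℕ) (fun k n => f k.1 n + k.2)
    (by simp [Cardinal.mk_prod]) (fun k => mem2 hm k.1 k.2)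
    fun _ ⟨_, α, N, h⟩ => ⟨_, ⟨(α, N), rfl⟩, h⟩

lemma d3 (hk : KeyProp f) (hm : ∀ α, Monotone (f α)) [Infinite ι] :
    dNum (Fam3 f) = Cardinal.mk ι :=
  d_eq hk subset_rfl (fun α => fam23 (fam12 (mem1 hm α))) (κ := Finset ι × ℕ)
    (fun k n => k.1.sup (fun β => f β n) + k.2)
    (by simp [Cardinal.mk_prod]) (fun k => mem3 hm k.1 k.2)
    fun _ ⟨_, D, N, h⟩ => ⟨_, ⟨(D, N), rfl⟩, h⟩

end family

/-- For `λ ∈ {1, 2, ℵ₀}` and `𝔲 ≤ κ ≤ 𝔠`, there is a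
downward-closed family with countable upper bound, bounding number `λ` and
dominating number `κ`. -/
theorem bounded_family_uNum_spectrum
    (lam : Cardinal) (hlam : lam ∈ ({1, 2, Cardinal.aleph0} : Set Cardinal))
    (kappa : Cardinal) (h1 : uNum ≤ kappa) (h2 : kappa ≤ Cardinal.continuum) :
    ∃ F : Set (ℕ → ℕ), F ⊆ MonoFam ∧ DownwardClosed F ∧ CountableUpperBound F ∧
      bNum F = lam ∧ dNum F = kappa := by
  obtain ⟨U, hU, B, hB1, hB2, hBc⟩ := uNum_exists
  have hBinf := base_infinite hU hB1 hB2
  have : Infinite B := hBinf.to_subtype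
  induction kappa using Cardinal.inductionOn with | _ ι => ?_
  rw [← hBc] at h1
  obtain ⟨i⟩ := h1
  have : Infinite ι := Infinite.of_injective i i.injective
  have h2' : Cardinal.mk ι ≤ Cardinal.mk (ℕ → Bool) := by simpa using h2
  obtain ⟨j⟩ := h2'
  let bb : ι → Set ℕ := fun a => (Function.invFun i a).1
  let AA : ι → Set ℕ := fun a => adSet (j a)
  have hbb : range bb = B := by
    ext s
    constructor
    · rintro ⟨a, rfl⟩
      exact (Function.invFun i a).2
    · intro hs
      refine ⟨i ⟨s, hs⟩, ?_⟩
      show (Function.invFun i (i ⟨s, hs⟩)).1 = s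
      rw [Function.leftInverse_invFun i.injective]
  let f : ι → ℕ → ℕ := fun a => basicF (bb a) (AA a)
  have hm : ∀ a, Monotone (f a) := fun a => basicF_mono _ _
  have hk : KeyProp f := keyProp_basic bb AA (fun _ => rfl) (fun a => adSet_infinite _)
    (fun a b hab => adSet_inter (fun e => hab (j.injective e)))
  have hcub : ∀ F : Set (ℕ → ℕ), F ⊆ Fam3 f → (∀ α, f α ∈ F) → CountableUpperBound F :=
    fun F h3 h4 => cub hU hB1 hB2 bb AA hbb (fun _ => rfl) h3 h4
  rcases hlam with rfl | rfl | rfl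
  · exact ⟨Fam1 f, fun _ h => h.1, fun h hh g ⟨_, α, hα⟩ hl => ⟨hh, α, hl.tr hα⟩,
      hcub _ (fam12.trans fam23) (mem1 hm), b1 hk hm, d1 hk hm⟩
  · exact ⟨Fam2 f, fun _ h => h.1, fun h hh g ⟨_, α, N, hα⟩ hl => ⟨hh, α, N, hl.tr hα⟩,
      hcub _ fam23 (fun a => fam12 (mem1 hm a)), b2 hk hm, d2 hk hm⟩
  · exact ⟨Fam3 f, fun _ h => h.1, fun h hh g ⟨_, α, N, hα⟩ hl => ⟨hh, α, N, hl.tr hα⟩,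
      hcub _ subset_rfl (fun a => fam23 (fam12 (mem1 hm a))), b3 hk hm, d3 hk hm⟩
end

section
/- Let H ⊆ ω^↑ω be an unbounded family (unbounded in ω^↑ω under ≤*) and let λ be an infinite regular cardinal with λ ≤ 𝔟. Then there is a downward-closed family F ⊆ ω^↑ω with a countable upper bound such that b(F) = min{λ, b(H)} and d(F) = d(H). -/
open Filter Set

lemma exists_gt_of_small {lam : Cardinal.{0}} (hreg : lam.IsRegular) (S : Set lam.ord.ToType)
    (hS : Cardinal.mk S < lam) : ∃ a, ∀ s ∈ S, s < a := by
  by_contra hcon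
  push Not at hcon
  have h1 : IsCofinal S := hcon
  have h2 := Order.cof_le h1
  have h3 : Order.cof lam.ord.ToType = lam := by
    simpa using hreg.cof_ord
  rw [h3] at h2
  exact absurd hS (not_lt.mpr h2)

lemma bNum_le_mk {F A : Set (ℕ → ℕ)} (h1 : A ⊆ F) (h2 : UnboundedIn A F) :
    bNum F ≤ Cardinal.mk A := csInf_le' ⟨A, h1, h2, rfl⟩

lemma dNum_le_mk {F A : Set (ℕ → ℕ)} (h1 : A ⊆ F) (h2 : DominatesIn A F) :
    dNum F ≤ Cardinal.mk A := csInf_le' ⟨A, h1, h2, rfl⟩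

lemma bNum_spec (F : Set (ℕ → ℕ)) :
    ∃ A, A ⊆ F ∧ UnboundedIn A F ∧ Cardinal.mk A = bNum F := by
  have : bNum F ∈ {c : Cardinal | ∃ H : Set (ℕ → ℕ), H ⊆ F ∧ UnboundedIn H F ∧ Cardinal.mk H = c} := by
    apply csInf_mem
    refine ⟨_, F, subset_rfl, fun f hf => ⟨f, hf, ?_⟩, rfl⟩
    intro h
    obtain ⟨n, hn⟩ := Filter.Eventually.exists h
    exact lt_irrefl _ hn
  exact this

lemma dNum_spec (F : Set (ℕ → ℕ)) :
    ∃ A, A ⊆ F ∧ DominatesIn A F ∧ Cardinal.mk A = dNum F := by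
  have : dNum F ∈ {c : Cardinal | ∃ H : Set (ℕ → ℕ), H ⊆ F ∧ DominatesIn H F ∧ Cardinal.mk H = c} := by
    apply csInf_mem
    exact ⟨_, F, subset_rfl, fun f hf => ⟨f, hf, Eventually.of_forall fun n => le_rfl⟩, rfl⟩
  exact this

lemma exists_mono_bound (P : ℕ → ℕ → Prop) (h : ∀ m, ∀ᶠ n in atTop, P m n) :
    ∃ t : ℕ → ℕ, Monotone t ∧ ∀ m n, t m ≤ n → P m n := by
  have h' : ∀ m, ∃ N, ∀ n, N ≤ n → P m n := fun m => eventually_atTop.1 (h m)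
  choose t0 ht0 using h'
  refine ⟨fun m => ∑ i ∈ Finset.range (m+1), t0 i, ?_, ?_⟩
  · intro a b hab
    apply Finset.sum_le_sum_of_subset
    intro x hx
    simp only [Finset.mem_range] at hx ⊢
    omega
  · intro m n hn
    apply ht0
    refine le_trans ?_ hn
    exact Finset.single_le_sum (f := t0) (fun i _ => Nat.zero_le _) (by simp)

lemma step_exists (S : Set (ℕ → ℕ)) (hS : ∀ s ∈ S, Tendsto s atTop atTop)
    (hc : Cardinal.mk S < bNum MonoFam) :
    ∃ r : ℕ → ℕ, (∀ n, r n ≤ n) ∧ Tendsto r atTop atTop ∧ ∀ s ∈ S, LtStar r s := by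
  have h1 : ∀ s : S, ∃ t : ℕ → ℕ, Monotone t ∧ ∀ m n, t m ≤ n → m < s.1 n := by
    intro s
    exact exists_mono_bound (fun m n => m < s.1 n) (fun m => (hS s.1 s.2).eventually_gt_atTop m)
  choose T hT1 hT2 using h1
  have h2 : ¬ UnboundedIn (range T) MonoFam := by
    intro h
    have h3 := bNum_le_mk (F := MonoFam) (A := range T) (by rintro _ ⟨s, rfl⟩; exact hT1 s) h
    exact absurd (h3.trans Cardinal.mk_range_le) (not_le.mpr hc)
  unfold UnboundedIn at h2
  push Not at h2
  obtain ⟨t, htm, ht⟩ := h2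
  have hge : ∀ M n, M ≤ n → t M ≤ n → M ≤ Nat.findGreatest (fun m => t m ≤ n) n :=
    fun M n h1 h2 => Nat.le_findGreatest h1 h2
  have htend : Tendsto (fun n => Nat.findGreatest (fun m => t m ≤ n) n) atTop atTop := by
    rw [tendsto_atTop]
    intro M
    filter_upwards [eventually_ge_atTop M, eventually_ge_atTop (t M)] with n h1 h2
    exact hge M n h1 h2
  refine ⟨fun n => Nat.findGreatest (fun m => t m ≤ n) n, fun n => Nat.findGreatest_le n, htend, ?_⟩
  intro s hs
  have h4 := htend.eventually (ht (T ⟨s, hs⟩) ⟨_, rfl⟩)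
  unfold LtStar
  filter_upwards [h4, eventually_ge_atTop (t 0)] with n h5 h6
  have h7 : t (Nat.findGreatest (fun m => t m ≤ n) n) ≤ n :=
    Nat.findGreatest_spec (P := fun m => t m ≤ n) (Nat.zero_le n) h6
  exact hT2 ⟨s, hs⟩ _ n (by omega)

lemma chain_exists (lam : Cardinal.{0}) (hlam : lam ≤ bNum MonoFam) :
    ∃ r : lam.ord.ToType → ℕ → ℕ, (∀ a n, r a n ≤ n) ∧ (∀ a, Tendsto (r a) atTop atTop) ∧
      ∀ a b, a < b → LtStar (r b) (r a) := by
  let P : Set (ℕ → ℕ) → (ℕ → ℕ) → Prop := fun S r =>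
    (∀ n, r n ≤ n) ∧ Tendsto r atTop atTop ∧ ∀ s ∈ S, LtStar r s
  let wf : WellFounded ((· < ·) : lam.ord.ToType → lam.ord.ToType → Prop) := wellFounded_lt
  let r : lam.ord.ToType → ℕ → ℕ :=
    wf.fix (fun b ih => Classical.epsilon (P (range fun c : Iio b => ih c.1 c.2)))
  have hr : ∀ b, r b = Classical.epsilon (P (range fun c : Iio b => r c.1)) :=
    fun b => wf.fix_eq _ b
  have key : ∀ b, P (range fun c : Iio b => r c.1) (r b) := by
    intro b
    induction b using wf.induction with
    | _ b ih =>
      rw [hr b]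
      apply Classical.epsilon_spec (p := P (range fun c : Iio b => r c.1))
      apply step_exists
      · rintro _ ⟨c, rfl⟩
        exact (ih c.1 c.2).2.1
      · exact (Cardinal.mk_range_le.trans_lt (Cardinal.mk_Iio_toType_ord_lt b)).trans_le hlam
  exact ⟨r, fun a => (key a).1, fun a => (key a).2.1,
    fun a b hab => (key b).2.2 _ ⟨⟨a, hab⟩, rfl⟩⟩

noncomputable def invF (h : ℕ → ℕ) (n : ℕ) : ℕ := sInf {k | n ≤ h k + k}

lemma invF_le_iff {h : ℕ → ℕ} (hm : Monotone h) (n k : ℕ) : invF h n ≤ k ↔ n ≤ h k + k := by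
  constructor
  · intro hk
    have h1 : invF h n ∈ {k | n ≤ h k + k} := Nat.sInf_mem ⟨n, by simp⟩
    have h1' : n ≤ h (invF h n) + invF h n := h1
    have := hm hk
    omega
  · intro hk
    exact Nat.sInf_le hk

lemma invF_le_self (h : ℕ → ℕ) (n : ℕ) : invF h n ≤ n := Nat.sInf_le (by simp)

lemma invF_tendsto {h : ℕ → ℕ} (hm : Monotone h) : Tendsto (invF h) atTop atTop := by
  rw [tendsto_atTop]
  intro M
  filter_upwards [eventually_gt_atTop (h M + M)] with n hn
  by_contra hc
  have := (invF_le_iff hm n M).1 (by omega)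
  omega

lemma invF_anti {h h' : ℕ → ℕ} (hm : Monotone h) (hm' : Monotone h') (hle : LeStar h h') :
    ∀ᶠ n in atTop, invF h' n ≤ invF h n := by
  filter_upwards [(invF_tendsto hm).eventually hle] with n hn
  rw [invF_le_iff hm']
  have := (invF_le_iff hm n (invF h n)).1 le_rfl
  omega

lemma leStar_of_invF {h h' : ℕ → ℕ} (hm : Monotone h) (hm' : Monotone h')
    (hle : ∀ᶠ n in atTop, invF h' n ≤ invF h n) : LeStar h h' := by
  have h1 : Tendsto (fun k => h k + k) atTop atTop :=
    tendsto_atTop_mono (fun k => Nat.le_add_left k (h k)) tendsto_id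
  unfold LeStar
  filter_upwards [h1.eventually hle] with k hk
  have h2 := (invF_le_iff hm (h k + k) k).2 le_rfl
  have h3 := (invF_le_iff hm' (h k + k) k).1 (hk.trans h2)
  omega

section Fam
variable {I : Type} (q : I → ℕ → ℕ)

def topF (i : I) (n : ℕ) : ℕ := (n+1)^3 - q i n

def FamQ : Set (ℕ → ℕ) := {f | Monotone f ∧ ∃ i, LeStar f (topF q i)}

variable {q}

lemma cube_ge (n : ℕ) : (n+1)^2 ≤ (n+1)^3 := Nat.pow_le_pow_right (by omega) (by omega)

lemma topF_mem (hq : ∀ i n, q i n ≤ (n+1)^2) (i : I) : topF q i ∈ FamQ q := by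
  refine ⟨monotone_nat_of_le_succ fun n => ?_, i, Eventually.of_forall fun n => le_rfl⟩
  unfold topF
  have h1 := hq i (n+1)
  have h2 : (n+1)^3 + (n+1+1)^2 ≤ (n+1+1)^3 := by
    ring_nf
    omega
  omega

lemma famQ_down : DownwardClosed (FamQ q) := by
  rintro f hf g ⟨_, i, hi⟩ hfg
  refine ⟨hf, i, ?_⟩
  filter_upwards [hi, hfg] with n h1 h2
  exact h2.trans h1

lemma famQ_bNum_le (hq : ∀ i n, q i n ≤ (n+1)^2) (A : Set I)
    (hA : ∀ i, ∃ a ∈ A, ¬ LtStar (q i) (q a)) : bNum (FamQ q) ≤ Cardinal.mk A := by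
  refine (bNum_le_mk (A := topF q '' A) ?_ ?_).trans Cardinal.mk_image_le
  · rintro _ ⟨a, _, rfl⟩
    exact topF_mem hq a
  · rintro f ⟨_, i, hi⟩
    obtain ⟨a, ha, hn⟩ := hA i
    refine ⟨_, ⟨a, ha, rfl⟩, fun hlt => hn ?_⟩
    unfold LtStar
    filter_upwards [hi, hlt] with n h1 h2
    have := hq i n
    have := hq a n
    have := cube_ge n
    unfold topF at *
    omega

lemma famQ_le_bNum (hq : ∀ i n, q i n ≤ (n+1)^2) (c : Cardinal.{0})
    (hc : ∀ A : Set I, (∀ i, ∃ a ∈ A, ¬ LtStar (q i) (q a)) → c ≤ Cardinal.mk A) :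
    c ≤ bNum (FamQ q) := by
  obtain ⟨B, hB1, hB2, hB3⟩ := bNum_spec (FamQ q)
  rw [← hB3]
  choose j hj using fun b : B => (hB1 b.2).2
  refine (hc (range j) ?_).trans Cardinal.mk_range_le
  intro i
  obtain ⟨b, hb, hn⟩ := hB2 _ (topF_mem hq i)
  refine ⟨_, ⟨⟨b, hb⟩, rfl⟩, fun hlt => hn ?_⟩
  unfold LtStar
  filter_upwards [hj ⟨b, hb⟩, hlt] with n h1 h2
  have := hq i n
  have := hq (j ⟨b, hb⟩) n
  have := cube_ge n
  unfold topF at *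
  omega

lemma famQ_dNum_le (hq : ∀ i n, q i n ≤ (n+1)^2) (A : Set I)
    (hA : ∀ i, ∃ a ∈ A, LeStar (q a) (q i)) : dNum (FamQ q) ≤ Cardinal.mk A := by
  refine (dNum_le_mk (A := topF q '' A) ?_ ?_).trans Cardinal.mk_image_le
  · rintro _ ⟨a, _, rfl⟩
    exact topF_mem hq a
  · rintro f ⟨_, i, hi⟩
    obtain ⟨a, ha, hn⟩ := hA i
    refine ⟨_, ⟨a, ha, rfl⟩, ?_⟩
    unfold LeStar
    filter_upwards [hi, hn] with n h1 h2
    unfold topF at *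
    omega

lemma famQ_le_dNum (hq : ∀ i n, q i n ≤ (n+1)^2) (c : Cardinal.{0})
    (hc : ∀ A : Set I, (∀ i, ∃ a ∈ A, LeStar (q a) (q i)) → c ≤ Cardinal.mk A) :
    c ≤ dNum (FamQ q) := by
  obtain ⟨B, hB1, hB2, hB3⟩ := dNum_spec (FamQ q)
  rw [← hB3]
  choose j hj using fun b : B => (hB1 b.2).2
  refine (hc (range j) ?_).trans Cardinal.mk_range_le
  intro i
  obtain ⟨b, hb, hn⟩ := hB2 _ (topF_mem hq i)
  refine ⟨_, ⟨⟨b, hb⟩, rfl⟩, ?_⟩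
  unfold LeStar
  filter_upwards [hj ⟨b, hb⟩, hn] with n h1 h2
  have := hq i n
  have := hq (j ⟨b, hb⟩) n
  have := cube_ge n
  unfold topF at *
  omega

lemma famQ_cub (hq : ∀ i n, q i n ≤ (n+1)^2) (ht : ∀ i, Tendsto (q i) atTop atTop)
    (hno : ∀ p : ℕ → ℕ, Tendsto p atTop atTop → ¬ ∀ i, LeStar p (q i)) :
    CountableUpperBound (FamQ q) := by
  refine ⟨{fun n => (n+1)^3}, countable_singleton _, ?_, ?_⟩
  · rintro _ rfl
    refine ⟨fun a b hab => Nat.pow_le_pow_left (by omega) 3, ?_⟩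
    rintro f ⟨_, i, hi⟩ N
    filter_upwards [hi, (ht i).eventually_ge_atTop N] with n h1 h2
    have := hq i n
    have := cube_ge n
    unfold topF at h1
    omega
  · rintro ⟨p, _, hp1, hp2⟩
    have hp3 := hp2 _ rfl
    apply hno (fun n => (n+1)^3 - p n)
    · rw [tendsto_atTop]
      intro N
      filter_upwards [hp3 N] with n hn
      omega
    · intro i
      unfold LeStar
      filter_upwards [hp1 _ (topF_mem hq i) 0, hp3 0] with n h1 h2
      have := hq i n
      have := cube_ge n
      unfold topF at h1
      omega
end Fam

/-- The gap functions: on even positions they code `h` and `a` lexicographically,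
on odd positions they code `a` (or nothing, if `e = false`). -/
noncomputable def gapF {J : Type} (r : J → ℕ → ℕ) (H : Set (ℕ → ℕ)) (e : Bool) (i : J × H) (n : ℕ) : ℕ :=
  if n % 2 = 0 then
    invF i.2.1 (n/2) * (invF i.2.1 (n/2) + 1) + r i.1 (invF i.2.1 (n/2))
  else if e then r i.1 (n/2) else n/2

section Gap
variable {J : Type} {r : J → ℕ → ℕ} {H : Set (ℕ → ℕ)}

lemma half_tendsto : Tendsto (fun n : ℕ => n / 2) atTop atTop :=
  Nat.tendsto_div_const_atTop (by norm_num)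

lemma gapF_even (e : Bool) (i : J × H) (n : ℕ) : gapF r H e i (2*n) =
    invF i.2.1 n * (invF i.2.1 n + 1) + r i.1 (invF i.2.1 n) := by
  have : 2 * n / 2 = n := by omega
  simp [gapF, this]

lemma gapF_odd_true (i : J × H) (n : ℕ) : gapF r H true i (2*n+1) = r i.1 n := by
  have : (2 * n + 1) / 2 = n := by omega
  have h2 : (2 * n + 1) % 2 = 1 := by omega
  simp [gapF, this, h2]

lemma gapF_odd_false (i : J × H) (n : ℕ) : gapF r H false i (2*n+1) = n := by
  have : (2 * n + 1) / 2 = n := by omega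
  have h2 : (2 * n + 1) % 2 = 1 := by omega
  simp [gapF, this, h2]

lemma even_tendsto : Tendsto (fun n : ℕ => 2 * n) atTop atTop :=
  tendsto_atTop_mono (fun n => by simp only [id]; omega) tendsto_id

lemma odd_tendsto : Tendsto (fun n : ℕ => 2 * n + 1) atTop atTop :=
  tendsto_atTop_mono (fun n => by simp only [id]; omega) tendsto_id

lemma gapF_le (hr : ∀ a n, r a n ≤ n) (e : Bool) (i : J × H) (n : ℕ) :
    gapF r H e i n ≤ (n+1)^2 := by
  unfold gapF
  have h1 := invF_le_self i.2.1 (n/2)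
  have h2 := hr i.1 (invF i.2.1 (n/2))
  have h3 := hr i.1 (n/2)
  have h5 : n ≤ (n+1)^2 := by nlinarith
  split_ifs
  · generalize invF i.2.1 (n/2) = m at *
    have h4 : m ≤ n := by omega
    nlinarith
  · omega
  · omega

lemma gapF_tendsto (hH : H ⊆ MonoFam) (ht : ∀ a, Tendsto (r a) atTop atTop) (e : Bool) (i : J × H) :
    Tendsto (gapF r H e i) atTop atTop := by
  rw [tendsto_atTop]
  intro M
  filter_upwards [half_tendsto.eventually ((invF_tendsto (hH i.2.2)).eventually_ge_atTop M),
    half_tendsto.eventually ((ht i.1).eventually_ge_atTop M),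
    half_tendsto.eventually_ge_atTop M] with n h1 h2 h3
  unfold gapF
  split_ifs
  · nlinarith
  · omega
  · omega

lemma gapF_no (hH : H ⊆ MonoFam) (hunb : UnboundedIn H MonoFam) (hr : ∀ a n, r a n ≤ n)
    (a0 : J) (e : Bool) (p : ℕ → ℕ) (hp : Tendsto p atTop atTop) :
    ¬ ∀ i, LeStar p (gapF r H e i) := by
  intro hall
  obtain ⟨t, htm, ht⟩ := exists_mono_bound (fun k n => (k+1)^2 < p (2*n))
    (fun k => (hp.comp even_tendsto).eventually_gt_atTop _)
  obtain ⟨h, hh, hn⟩ := hunb t htm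
  apply hn
  have h1 := even_tendsto.eventually (hall (a0, ⟨h, hh⟩))
  have h2 : Tendsto (fun k => h k + k) atTop atTop :=
    tendsto_atTop_mono (fun k => Nat.le_add_left k (h k)) tendsto_id
  unfold LtStar
  filter_upwards [h2.eventually h1] with k hk
  by_contra hc
  have h3 := ht k (h k + k) (by omega)
  rw [gapF_even] at hk
  simp only at hk
  have h4 := (invF_le_iff (hH hh) (h k + k) k).2 le_rfl
  have h5 := hr a0 (invF h (h k + k))
  generalize invF h (h k + k) = m at *
  nlinarith

lemma lex_le {m m' x x' : ℕ} (h : m' ≤ m) (hx' : x' ≤ m') (hx : m' = m → x' ≤ x) :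
    m' * (m' + 1) + x' ≤ m * (m + 1) + x := by
  rcases h.eq_or_lt with h1 | h1
  · subst h1
    have := hx rfl
    omega
  · nlinarith

lemma lex_lt' {m m' x x' : ℕ} (h : m' ≤ m) (hx' : x' ≤ m') (hx : m' = m → x' < x) :
    m' * (m' + 1) + x' < m * (m + 1) + x := by
  rcases h.eq_or_lt with h1 | h1
  · subst h1
    have := hx rfl
    omega
  · nlinarith

lemma gapF_leStar_imp (hH : H ⊆ MonoFam) (hr : ∀ a n, r a n ≤ n) {e : Bool} {i j : J × H}
    (h : LeStar (gapF r H e j) (gapF r H e i)) : LeStar i.2.1 j.2.1 := by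
  apply leStar_of_invF (hH i.2.2) (hH j.2.2)
  filter_upwards [even_tendsto.eventually h] with n hn
  rw [gapF_even, gapF_even] at hn
  have h1 := hr i.1 (invF i.2.1 n)
  generalize invF i.2.1 n = m at *
  generalize invF j.2.1 n = m' at *
  by_contra hc
  have h2 : m + 1 ≤ m' := by omega
  nlinarith

lemma gapF_leStar (hH : H ⊆ MonoFam) (hr : ∀ a n, r a n ≤ n) {e : Bool} {a : J} {h h' : H}
    (hle : LeStar h.1 h'.1) : LeStar (gapF r H e (a, h')) (gapF r H e (a, h)) := by
  unfold LeStar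
  filter_upwards [half_tendsto.eventually (invF_anti (hH h.2) (hH h'.2) hle)] with n hn
  unfold gapF
  simp only
  split_ifs
  · exact lex_le hn (hr _ _) (fun h => by rw [h])
  · exact le_rfl
  · exact le_rfl

lemma gapF_ltStar (hH : H ⊆ MonoFam) (hr : ∀ a n, r a n ≤ n) {a b : J} {h h' : H}
    (hab : LtStar (r b) (r a)) (hle : LeStar h.1 h'.1) :
    LtStar (gapF r H true (b, h')) (gapF r H true (a, h)) := by
  unfold LtStar
  filter_upwards [half_tendsto.eventually (invF_anti (hH h.2) (hH h'.2) hle),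
    half_tendsto.eventually ((invF_tendsto (hH h.2)).eventually hab),
    half_tendsto.eventually hab] with n hn h2 h3
  unfold gapF
  simp only
  split_ifs
  · exact lex_lt' hn (hr _ _) (fun h => by rw [h]; exact h2)
  · exact h3

end Gap

/-- From an unbounded family `H` and a regular `λ ≤ 𝔟`, one gets
a downward-closed family `F` with countable upper bound, `b(F) = min{λ, b(H)}`
and `d(F) = d(H)`. -/
theorem bounded_family_from_unbounded (H : Set (ℕ → ℕ)) (hH : H ⊆ MonoFam)
    (hunb : UnboundedIn H MonoFam)
    (lam : Cardinal) (hreg : lam.IsRegular) (hlam : lam ≤ bNum MonoFam) :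
    ∃ F : Set (ℕ → ℕ), F ⊆ MonoFam ∧ DownwardClosed F ∧ CountableUpperBound F ∧
      bNum F = min lam (bNum H) ∧ dNum F = dNum H := by
  obtain ⟨r, hr, hrt, hrlt⟩ := chain_exists lam hlam
  have irr : ∀ f, ¬ LtStar f f := fun f hf => by
    obtain ⟨n, hn⟩ := Filter.Eventually.exists hf
    exact lt_irrefl _ hn
  obtain ⟨h0, hh0, -⟩ := hunb (fun _ => 0) (fun _ _ _ => le_rfl)
  have hmk : Cardinal.mk lam.ord.ToType = lam := Cardinal.mk_ord_toType lam
  obtain ⟨a0⟩ : Nonempty lam.ord.ToType := by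
    rw [← Cardinal.mk_ne_zero_iff, hmk]
    exact hreg.ne_zero
  have common : ∀ e : Bool, FamQ (gapF r H e) ⊆ MonoFam ∧ DownwardClosed (FamQ (gapF r H e)) ∧
      CountableUpperBound (FamQ (gapF r H e)) ∧ dNum (FamQ (gapF r H e)) = dNum H := by
    intro e
    refine ⟨fun f hf => hf.1, famQ_down, famQ_cub (gapF_le hr e) (gapF_tendsto hH hrt e)
      (gapF_no hH hunb hr a0 e), le_antisymm ?_ ?_⟩
    · obtain ⟨D, hD1, hD2, hD3⟩ := dNum_spec H
      rw [← hD3]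
      have hbig : lam ≤ Cardinal.mk D := by
        refine hlam.trans (bNum_le_mk (hD1.trans hH) ?_)
        intro f hf
        obtain ⟨h, hh, hn⟩ := hunb f hf
        obtain ⟨d, hd, hle⟩ := hD2 h hh
        refine ⟨d, hd, fun hlt => hn ?_⟩
        unfold LtStar
        filter_upwards [hlt, hle] with n h1 h2
        omega
      -- a dominating set in the index set
      refine (famQ_dNum_le (gapF_le hr e)
        (range fun x : lam.ord.ToType × D => (x.1, (⟨x.2.1, hD1 x.2.2⟩ : H))) ?_).trans ?_
      · rintro ⟨a, h⟩
        obtain ⟨d, hd, hle⟩ := hD2 h.1 h.2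
        exact ⟨_, ⟨(a, ⟨d, hd⟩), rfl⟩, gapF_leStar hH hr hle⟩
      · refine Cardinal.mk_range_le.trans ?_
        rw [Cardinal.mk_prod, Cardinal.lift_id, Cardinal.lift_id, hmk]
        exact Cardinal.mul_le_of_le (hreg.aleph0_le.trans hbig) hbig le_rfl
    · apply famQ_le_dNum (gapF_le hr e)
      intro A hA
      refine (dNum_le_mk (A := (fun i : lam.ord.ToType × H => i.2.1) '' A) ?_ ?_).trans
        Cardinal.mk_image_le
      · rintro _ ⟨i, _, rfl⟩
        exact i.2.2
      · intro h hh
        obtain ⟨a, ha, hle⟩ := hA (a0, ⟨h, hh⟩)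
        exact ⟨_, ⟨a, ha, rfl⟩, gapF_leStar_imp hH hr hle⟩
  by_cases hcase : ∀ h ∈ H, ∃ h' ∈ H, LtStar h h'
  · obtain ⟨c1, c2, c3, c4⟩ := common true
    refine ⟨_, c1, c2, c3, le_antisymm (le_min ?_ ?_) ?_, c4⟩
    · refine (famQ_bNum_le (gapF_le hr true)
        (range fun a : lam.ord.ToType => (a, (⟨h0, hh0⟩ : H))) ?_).trans
        (Cardinal.mk_range_le.trans hmk.le)
      rintro ⟨b, h⟩
      refine ⟨_, ⟨b, rfl⟩, fun hlt => irr (r b) ?_⟩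
      unfold LtStar
      filter_upwards [odd_tendsto.eventually hlt] with n hn
      rwa [gapF_odd_true, gapF_odd_true] at hn
    · obtain ⟨B, hB1, hB2, hB3⟩ := bNum_spec H
      rw [← hB3]
      refine (famQ_bNum_le (gapF_le hr true)
        (range fun b : B => (a0, (⟨b.1, hB1 b.2⟩ : H))) ?_).trans Cardinal.mk_range_le
      rintro ⟨a, h⟩
      obtain ⟨h', hh', hlt⟩ := hcase h.1 h.2
      obtain ⟨b, hb, hn⟩ := hB2 h' hh'
      refine ⟨_, ⟨⟨b, hb⟩, rfl⟩, fun hl => hn ?_⟩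
      have hle : LeStar (gapF r H true (a, h)) (gapF r H true (a0, ⟨b, hB1 hb⟩)) :=
        Eventually.mono hl fun n hn => le_of_lt hn
      have h3 := gapF_leStar_imp hH hr hle
      unfold LtStar
      filter_upwards [h3, hlt] with n h1 h2
      exact lt_of_le_of_lt h1 h2
    · apply famQ_le_bNum (gapF_le hr true)
      intro A hA
      by_contra hc
      rw [not_le, lt_min_iff] at hc
      obtain ⟨b, hb⟩ := exists_gt_of_small hreg (Prod.fst '' A) (Cardinal.mk_image_le.trans_lt hc.1)
      have hnu : ¬ UnboundedIn ((fun i : lam.ord.ToType × H => i.2.1) '' A) H := by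
        intro hu
        have := bNum_le_mk (by rintro _ ⟨i, _, rfl⟩; exact i.2.2) hu
        exact absurd (this.trans Cardinal.mk_image_le) (not_le.mpr hc.2)
      unfold UnboundedIn at hnu
      push Not at hnu
      obtain ⟨h, hh, hlt⟩ := hnu
      obtain ⟨⟨a, k⟩, ha, hn⟩ := hA (b, ⟨h, hh⟩)
      apply hn
      refine gapF_ltStar hH hr (hrlt _ _ (hb a ⟨_, ha, rfl⟩)) ?_
      exact Eventually.mono (hlt _ ⟨_, ha, rfl⟩) fun n hn => le_of_lt hn
  · push Not at hcase
    obtain ⟨h, hh, hmax⟩ := hcase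
    obtain ⟨c1, c2, c3, c4⟩ := common false
    have hbH : bNum H = 1 := by
      apply le_antisymm
      · refine (bNum_le_mk (A := {h}) (by simpa using hh) ?_).trans (by simp)
        intro f hf
        exact ⟨h, rfl, hmax f hf⟩
      · obtain ⟨B, hB1, hB2, hB3⟩ := bNum_spec H
        rw [← hB3, Cardinal.one_le_iff_ne_zero, Cardinal.mk_ne_zero_iff]
        obtain ⟨b, hb, -⟩ := hB2 h hh
        exact ⟨b, hb⟩
    have hone : (1 : Cardinal) ≤ lam := by
      rw [Cardinal.one_le_iff_ne_zero]
      exact hreg.ne_zero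
    refine ⟨_, c1, c2, c3, ?_, c4⟩
    rw [hbH, min_eq_right hone]
    apply le_antisymm
    · refine (famQ_bNum_le (gapF_le hr false) {(a0, ⟨h, hh⟩)} ?_).trans (by simp)
      intro i
      refine ⟨_, rfl, fun hlt => irr id ?_⟩
      unfold LtStar
      filter_upwards [odd_tendsto.eventually hlt] with n hn
      rwa [gapF_odd_false, gapF_odd_false] at hn
    · apply famQ_le_bNum (gapF_le hr false)
      intro A hA
      rw [Cardinal.one_le_iff_ne_zero, Cardinal.mk_ne_zero_iff]
      obtain ⟨a, ha, -⟩ := hA (a0, ⟨h, hh⟩)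
      exact ⟨a, ha⟩
end
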